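/- Hardy's theorem, strict case: if f : ℝ → ℂ is measurable and satisfies |f(x)| ≤ C e^{-a x²} and |f̂(y)| ≤ C e^{-b y²} for all x, y ∈ ℝ with a·b > 1/4, then f = 0 almost everywhere. -/

import Mathlib

open MeasureTheory Real Complex

/-- The Fourier–Laplace transform of `f`, at a complex frequency `z`. -/
noncomputable def fourierLaplace (f : ℝ → ℂ) (z : ℂ) : ℂ :=
  ∫ x : ℝ, f x * Complex.exp (-Complex.I * x * z)

lemma exp_neg_mul_sq_add_mul_eq {a : ℝ} (ha : 0 < a) (c x : ℝ) :
    Real.exp (-a * x ^ 2 + c * x) =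
      Real.exp (-a * (x - c / (2 * a)) ^ 2) * Real.exp (c ^ 2 / (4 * a)) := by
  rw [← Real.exp_add]
  congr 1
  field

lemma integrable_exp_neg_mul_sq_add_mul {a : ℝ} (ha : 0 < a) (c : ℝ) :
    Integrable fun x : ℝ => Real.exp (-a * x ^ 2 + c * x) := by
  simp_rw [exp_neg_mul_sq_add_mul_eq ha]
  exact ((integrable_exp_neg_mul_sq ha).comp_sub_right (c / (2 * a))).mul_const _

lemma integral_exp_neg_mul_sq_add_mul {a : ℝ} (ha : 0 < a) (c : ℝ) :
    ∫ x : ℝ, Real.exp (-a * x ^ 2 + c * x) = √(π / a) * Real.exp (c ^ 2 / (4 * a)) := by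
  simp_rw [exp_neg_mul_sq_add_mul_eq ha, integral_mul_const]
  rw [integral_sub_right_eq_self fun x : ℝ => Real.exp (-a * x ^ 2), integral_gaussian]

lemma norm_exp_neg_I_mul_mul (x : ℝ) (z : ℂ) :
    ‖Complex.exp (-Complex.I * x * z)‖ = Real.exp (z.im * x) := by
  rw [Complex.norm_exp]
  congr 1
  simp [mul_comm]

section GaussianDecay

variable {f : ℝ → ℂ} {a C : ℝ}

lemma norm_fourierLaplace_integrand_le
    (hdecay : ∀ x : ℝ, ‖f x‖ ≤ C * Real.exp (-a * x ^ 2)) (z : ℂ) (x : ℝ) :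
    ‖f x * Complex.exp (-Complex.I * x * z)‖ ≤ C * Real.exp (-a * x ^ 2 + z.im * x) := by
  rw [norm_mul, norm_exp_neg_I_mul_mul, Real.exp_add, ← mul_assoc]
  gcongr
  exact hdecay x

lemma norm_fourierLaplace_le (ha : 0 < a)
    (hdecay : ∀ x : ℝ, ‖f x‖ ≤ C * Real.exp (-a * x ^ 2)) (z : ℂ) :
    ‖fourierLaplace f z‖ ≤ C * √(π / a) * Real.exp (1 / (4 * a) * z.im ^ 2) := by
  calc ‖fourierLaplace f z‖
      ≤ ∫ x : ℝ, C * Real.exp (-a * x ^ 2 + z.im * x) :=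
        norm_integral_le_of_norm_le ((integrable_exp_neg_mul_sq_add_mul ha _).const_mul C)
          (.of_forall (norm_fourierLaplace_integrand_le hdecay z))
    _ = C * √(π / a) * Real.exp (1 / (4 * a) * z.im ^ 2) := by
        rw [integral_const_mul, integral_exp_neg_mul_sq_add_mul ha, mul_assoc,
          div_mul_eq_mul_div, one_mul]

lemma integrable_fourierLaplace_integrand (hf : Measurable f) (ha : 0 < a)
    (hdecay : ∀ x : ℝ, ‖f x‖ ≤ C * Real.exp (-a * x ^ 2)) (z : ℂ) :
    Integrable fun x : ℝ => f x * Complex.exp (-Complex.I * x * z) :=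
  ((integrable_exp_neg_mul_sq_add_mul ha z.im).const_mul C).mono'
    (by fun_prop) (.of_forall (norm_fourierLaplace_integrand_le hdecay z))

lemma integrable_of_gaussian_decay (hf : Measurable f) (ha : 0 < a)
    (hdecay : ∀ x : ℝ, ‖f x‖ ≤ C * Real.exp (-a * x ^ 2)) : Integrable f := by
  simpa using integrable_fourierLaplace_integrand hf ha hdecay 0

lemma differentiable_fourierLaplace (hf : Measurable f) (ha : 0 < a) (hC : 0 ≤ C)
    (hdecay : ∀ x : ℝ, ‖f x‖ ≤ C * Real.exp (-a * x ^ 2)) :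
    Differentiable ℂ (fourierLaplace f) := by
  intro z₀
  set R : ℝ := |z₀.im| + 2
  refine (hasDerivAt_integral_of_dominated_loc_of_deriv_le
    (F := fun z (x : ℝ) => f x * Complex.exp (-Complex.I * x * z))
    (F' := fun z (x : ℝ) => f x * (Complex.exp (-Complex.I * x * z) * (-Complex.I * x)))
    (bound := fun x : ℝ => C * Real.exp (-a * x ^ 2 + R * x)
      + C * Real.exp (-a * x ^ 2 + (-R) * x))
    (Metric.ball_mem_nhds z₀ one_pos) (.of_forall fun z => by fun_prop)
    (integrable_fourierLaplace_integrand hf ha hdecay z₀) (by fun_prop)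
    (.of_forall fun x z hz => ?_)
    (((integrable_exp_neg_mul_sq_add_mul ha _).const_mul C).add
      ((integrable_exp_neg_mul_sq_add_mul ha _).const_mul C))
    (.of_forall fun x z _ => ?_)).2.differentiableAt
  · have hz_im : |z.im| ≤ |z₀.im| + 1 := by
      have h1 : |(z - z₀).im| ≤ 1 :=
        (Complex.abs_im_le_norm _).trans (mem_ball_iff_norm.1 hz).le
      have h2 := abs_add_le (z - z₀).im z₀.im
      simp only [Complex.sub_im, sub_add_cancel] at h1 h2
      linarith
    have hx : |x| ≤ Real.exp |x| := by linarith [Real.add_one_le_exp |x|]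
    have hzx : z.im * x ≤ (|z₀.im| + 1) * |x| :=
      (le_abs_self _).trans (by rw [abs_mul]; gcongr)
    have hR : Real.exp (R * |x|) ≤ Real.exp (R * x) + Real.exp (-R * x) := by
      rcases abs_cases x with ⟨h, _⟩ | ⟨h, _⟩ <;> rw [h]
      · linarith [Real.exp_pos (-R * x)]
      · rw [mul_neg, ← neg_mul]
        linarith [Real.exp_pos (R * x)]
    calc ‖f x * (Complex.exp (-Complex.I * x * z) * (-Complex.I * x))‖
        = ‖f x‖ * (Real.exp (z.im * x) * |x|) := by
          rw [norm_mul, norm_mul, norm_exp_neg_I_mul_mul]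
          simp
      _ ≤ C * Real.exp (-a * x ^ 2) * (Real.exp ((|z₀.im| + 1) * |x|) * Real.exp |x|) := by
          gcongr
          exact hdecay x
      _ = C * Real.exp (-a * x ^ 2) * Real.exp (R * |x|) := by
          rw [← Real.exp_add]
          congr 2
          ring
      _ ≤ C * Real.exp (-a * x ^ 2) * (Real.exp (R * x) + Real.exp (-R * x)) := by gcongr
      _ = _ := by
          rw [Real.exp_add, Real.exp_add]
          ring
  · have := ((hasDerivAt_id z).const_mul (-Complex.I * x)).cexp.const_mul (f x)
    simpa using this

end GaussianDecay

section PhragmenLindelof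

variable {F : ℂ → ℂ} {M s b : ℝ}

lemma re_mul_exp_sq (b N : ℝ) (u : ℂ) :
    (((b : ℂ) - N * Complex.I) * Complex.exp u ^ 2).re =
      Real.exp u.re ^ 2 *
        (b * (Real.cos u.im ^ 2 - Real.sin u.im ^ 2)
          + 2 * N * Real.cos u.im * Real.sin u.im) := by
  simp only [sq, Complex.mul_re, Complex.mul_im, Complex.sub_re, Complex.sub_im,
    Complex.exp_re, Complex.exp_im, Complex.ofReal_re, Complex.ofReal_im, Complex.I_re,
    Complex.I_im]
  ring

/-- Multiplying by `exp ((b - N i) z²)` and applying the Phragmén–Lindelöf principle in a sector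
`0 ≤ arg z ≤ θ` with `θ < π / 2` close to `π / 2`. -/
lemma norm_mul_exp_le_of_gaussian_growth (hF : Differentiable ℂ F) (hs : 0 ≤ s) (hsb : s < b)
    (hgrowth : ∀ z : ℂ, ‖F z‖ ≤ M * Real.exp (s * z.im ^ 2))
    (hreal : ∀ x : ℝ, ‖F x‖ ≤ M * Real.exp (-b * x ^ 2)) (N : ℝ) {u : ℂ}
    (hu₀ : 0 ≤ u.im) (hu : u.im < π / 2) :
    ‖F (Complex.exp u) * Complex.exp (((b : ℂ) - N * Complex.I) * Complex.exp u ^ 2)‖ ≤ M := by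
  have hM : 0 ≤ M := by
    simpa using (norm_nonneg _).trans (hgrowth 0)
  obtain ⟨θ, ⟨hθu, hθ⟩, hneg⟩ : ∃ θ ∈ Set.Ioo u.im (π / 2),
      s * Real.sin θ ^ 2 + (b * (Real.cos θ ^ 2 - Real.sin θ ^ 2)
        + 2 * N * Real.cos θ * Real.sin θ) < 0 := by
    have hcont : Continuous fun θ : ℝ => s * Real.sin θ ^ 2 +
        (b * (Real.cos θ ^ 2 - Real.sin θ ^ 2) + 2 * N * Real.cos θ * Real.sin θ) := by
      fun_prop
    have hev : ∀ᶠ θ in nhds (π / 2), s * Real.sin θ ^ 2 +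
        (b * (Real.cos θ ^ 2 - Real.sin θ ^ 2) + 2 * N * Real.cos θ * Real.sin θ) < 0 :=
      hcont.continuousAt.eventually_lt continuousAt_const (by simpa using hsb)
    have hmem : ∀ᶠ θ in nhdsWithin (π / 2) (Set.Iio (π / 2)), θ ∈ Set.Ioo u.im (π / 2) :=
      Ioo_mem_nhdsLT hu
    exact (hmem.and (hev.filter_mono nhdsWithin_le_nhds)).exists
  refine PhragmenLindelof.horizontal_strip (a := 0) (b := θ)
    (f := fun u => F (Complex.exp u) *
      Complex.exp (((b : ℂ) - N * Complex.I) * Complex.exp u ^ 2)) ?_ ⟨2, ?_,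
      s + ‖(b : ℂ) - N * Complex.I‖, ?_⟩ ?_ ?_ hu₀ hθu.le
  · exact Differentiable.diffContOnCl (by fun_prop)
  · rw [sub_zero, lt_div_iff₀ (hu₀.trans_lt hθu)]
    linarith
  · refine Asymptotics.IsBigO.of_bound M (.of_forall fun v => ?_)
    have him : (Complex.exp v).im ^ 2 ≤ Real.exp (2 * |v.re|) := by
      calc (Complex.exp v).im ^ 2 ≤ ‖Complex.exp v‖ ^ 2 := by
            rw [← sq_abs]
            gcongr
            exact Complex.abs_im_le_norm _
        _ = Real.exp (2 * v.re) := by rw [Complex.norm_exp, ← Real.exp_nat_mul]; norm_cast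
        _ ≤ _ := by gcongr; exact le_abs_self _
    have hre : ((((b : ℂ) - N * Complex.I)) * Complex.exp v ^ 2).re ≤
        ‖(b : ℂ) - N * Complex.I‖ * Real.exp (2 * |v.re|) := by
      refine (Complex.re_le_norm _).trans ?_
      rw [norm_mul, norm_pow, Complex.norm_exp, ← Real.exp_nat_mul]
      push_cast
      gcongr
      exact le_abs_self _
    rw [norm_mul, Complex.norm_exp, Real.norm_of_nonneg (Real.exp_nonneg _), add_mul,
      Real.exp_add, ← mul_assoc]
    gcongr
    exact (hgrowth _).trans (by gcongr)
  · intro v hv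
    have hexp : Complex.exp v = (Real.exp v.re : ℝ) := by
      apply Complex.ext <;> simp [Complex.exp_re, Complex.exp_im, hv]
    rw [norm_mul, Complex.norm_exp, re_mul_exp_sq, hv, hexp]
    calc _ ≤ M * Real.exp (-b * Real.exp v.re ^ 2) * _ := by
          gcongr
          exact hreal _
      _ = M := by
          rw [mul_assoc, ← Real.exp_add]
          simp [mul_comm]
  · intro v hv
    rw [norm_mul, Complex.norm_exp, re_mul_exp_sq, hv]
    calc _ ≤ M * Real.exp (s * (Complex.exp v).im ^ 2) * _ := by
          gcongr
          exact hgrowth _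
      _ = M * Real.exp (Real.exp v.re ^ 2 * (s * Real.sin θ ^ 2 +
            (b * (Real.cos θ ^ 2 - Real.sin θ ^ 2) + 2 * N * Real.cos θ * Real.sin θ))) := by
          rw [mul_assoc, ← Real.exp_add, Complex.exp_im, hv]
          congr 2
          ring
      _ ≤ M := mul_le_of_le_one_right hM
          (Real.exp_le_one_iff.2 (mul_nonpos_of_nonneg_of_nonpos (sq_nonneg _) hneg.le))

/-- An entire function that grows at most like `exp (s (im z)²)` and decays on the real line
like `exp (-b x²)` with `b > s` vanishes. -/
theorem eq_zero_of_gaussian_growth (hF : Differentiable ℂ F) (hs : 0 ≤ s) (hsb : s < b)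
    (hgrowth : ∀ z : ℂ, ‖F z‖ ≤ M * Real.exp (s * z.im ^ 2))
    (hreal : ∀ x : ℝ, ‖F x‖ ≤ M * Real.exp (-b * x ^ 2)) : F = 0 := by
  have hray : ∀ t : ℝ, F (Complex.exp (t + (π / 4 : ℝ) * Complex.I)) = 0 := by
    intro t
    have hbound : ∀ N : ℝ, ‖F (Complex.exp (t + (π / 4 : ℝ) * Complex.I))‖ ≤
        M * Real.exp (-(Real.exp t ^ 2 * N)) := by
      intro N
      have h := norm_mul_exp_le_of_gaussian_growth hF hs hsb hgrowth hreal N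
        (u := t + (π / 4 : ℝ) * Complex.I) (by simp; positivity) (by simp; linarith [pi_pos])
      rw [norm_mul, Complex.norm_exp, re_mul_exp_sq] at h
      have hsq : 2 * N * (√2 / 2) * (√2 / 2) = N := by
        linear_combination N / 2 * Real.sq_sqrt (zero_le_two : (0 : ℝ) ≤ 2)
      simp only [Complex.add_re, Complex.ofReal_re, Complex.re_ofReal_mul, Complex.I_re,
        mul_zero, add_zero, Complex.add_im, Complex.ofReal_im, Complex.im_ofReal_mul,
        Complex.I_im, mul_one, zero_add, Real.cos_pi_div_four, Real.sin_pi_div_four, sub_self,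
        hsq] at h
      rw [Real.exp_neg, ← div_eq_mul_inv]
      exact (le_div_iff₀ (Real.exp_pos _)).2 h
    have hlim : Filter.Tendsto (fun N : ℝ => M * Real.exp (-(Real.exp t ^ 2 * N)))
        Filter.atTop (nhds 0) := by
      simpa using (Real.tendsto_exp_neg_atTop_nhds_zero.comp
        (Filter.tendsto_id.const_mul_atTop (pow_pos (Real.exp_pos t) 2))).const_mul M
    exact norm_le_zero_iff.1 (ge_of_tendsto' hlim hbound)
  set w : ℂ := Complex.exp ((π / 4 : ℝ) * Complex.I)
  have hpos : ∀ r : ℝ, 0 < r → F (w * r) = 0 := by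
    intro r hr
    have h := hray (Real.log r)
    rwa [Complex.exp_add, ← Complex.ofReal_exp, Real.exp_log hr, mul_comm] at h
  have hana : AnalyticOnNhd ℂ (fun z => F (w * z)) Set.univ :=
    (show Differentiable ℂ fun z => F (w * z) by fun_prop).differentiableOn.analyticOnNhd
      isOpen_univ
  have htend : Filter.Tendsto ((↑) : ℝ → ℂ) (nhdsWithin 1 {1}ᶜ) (nhdsWithin 1 {1}ᶜ) := by
    refine tendsto_nhdsWithin_iff.2 ⟨?_, ?_⟩
    · exact (Complex.continuous_ofReal.tendsto' 1 1 (by simp)).mono_left nhdsWithin_le_nhds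
    · filter_upwards [self_mem_nhdsWithin] with x hx
      simpa using hx
  have hfreq : ∃ᶠ z in nhdsWithin (1 : ℂ) {1}ᶜ, F (w * z) = 0 :=
    htend.frequently (Filter.Eventually.frequently
      (((lt_mem_nhds one_pos).filter_mono nhdsWithin_le_nhds).mono hpos))
  have hzero := hana.eqOn_zero_of_preconnected_of_frequently_eq_zero isPreconnected_univ
    (Set.mem_univ 1) hfreq
  ext z
  have h : F (w * (z / w)) = 0 := hzero (Set.mem_univ (z / w))
  rwa [mul_div_cancel₀ z (Complex.exp_ne_zero _ : w ≠ 0)] at h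

end PhragmenLindelof

open scoped FourierTransform in
/-- An integrable function with vanishing Fourier transform vanishes almost everywhere. -/
theorem ae_eq_zero_of_fourier_eq_zero {f : ℝ → ℂ} (hf : Integrable f) (h : 𝓕 f = 0) :
    f =ᵐ[volume] 0 := by
  refine ae_eq_zero_of_integral_contDiff_smul_eq_zero hf.locallyIntegrable fun g hg hgc => ?_
  set G : SchwartzMap ℝ ℂ := HasCompactSupport.toSchwartzMap (f := fun x => (g x : ℂ))
    (hgc.comp_left Complex.ofReal_zero) (Complex.ofRealCLM.contDiff.comp hg)
  have hG : ∀ x, 𝓕 ((𝓕⁻ G : SchwartzMap ℝ ℂ) : ℝ → ℂ) x = g x := by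
    intro x
    rw [← SchwartzMap.fourier_coe, FourierTransform.fourier_fourierInv_eq]
    rfl
  have hflip : ∫ ξ, 𝓕 f ξ • (𝓕⁻ G : SchwartzMap ℝ ℂ) ξ =
      ∫ x, f x • 𝓕 ((𝓕⁻ G : SchwartzMap ℝ ℂ) : ℝ → ℂ) x := by
    simpa using! VectorFourier.integral_fourierIntegral_smul_eq_flip (L := innerₗ ℝ)
      Real.continuous_fourierChar continuous_inner hf (𝓕⁻ G : SchwartzMap ℝ ℂ).integrable
  simpa [h, hG, mul_comm] using hflip.symm

/-- Hardy's theorem, strict case: if `|f(x)| ≤ C e^{-ax²}` and `|f̂(y)| ≤ C e^{-by²}`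
with `ab > 1/4`, then `f = 0` almost everywhere. -/
theorem hardy_strict (f : ℝ → ℂ) (hf : Measurable f)
    (a b C : ℝ) (ha : 0 < a) (hb : 0 < b) (hC : 0 < C)
    (hab : 1 / 4 < a * b)
    (hdecay : ∀ x : ℝ, ‖f x‖ ≤ C * Real.exp (-a * x ^ 2))
    (hhat : ∀ y : ℝ,
      ‖(((2 * π) ^ (-(1 : ℝ) / 2) : ℝ) : ℂ) *
        ∫ x : ℝ, f x * Complex.exp (-Complex.I * x * y)‖ ≤ C * Real.exp (-b * y ^ 2)) :
    f =ᵐ[volume] 0 := by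
  have hconst : 0 < (2 * π) ^ (-(1 : ℝ) / 2) := by positivity
  set M : ℝ := max (C * √(π / a)) (C / (2 * π) ^ (-(1 : ℝ) / 2))
  have hzero : fourierLaplace f = 0 := by
    refine eq_zero_of_gaussian_growth (M := M) (s := 1 / (4 * a)) (b := b)
      (differentiable_fourierLaplace hf ha hC.le hdecay) (by positivity) ?_ (fun z => ?_)
      (fun y => ?_)
    · rw [div_lt_iff₀ (by positivity)]
      linarith
    · refine (norm_fourierLaplace_le ha hdecay z).trans ?_
      gcongr
      exact le_max_left _ _
    · have h := hhat y
      rw [norm_mul, Complex.norm_real, Real.norm_of_nonneg hconst.le, ← le_div_iff₀' hconst,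
        mul_div_right_comm] at h
      refine h.trans ?_
      gcongr
      exact le_max_right _ _
  refine ae_eq_zero_of_fourier_eq_zero (integrable_of_gaussian_decay hf ha hdecay) ?_
  ext y
  rw [Real.fourier_eq', Pi.zero_apply, ← show fourierLaplace f (2 * π * y) = 0 by rw [hzero]; rfl]
  refine integral_congr_ae (.of_forall fun x => ?_)
  simp only [smul_eq_mul, mul_comm (f x)]
  congr 2
  simp
  ring
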